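/- Let φ be a holomorphic self-map of the unit disc 𝔻. Then ℳ(φ) = 𝒟 — that is, the weighted composition operator W_{u,φ} is bounded on 𝒟 for every u ∈ 𝒟 — if and only if both (1) ‖φ‖_∞ := sup_{z∈𝔻} |φ(z)| < 1, and (2) φ is a multiplier of 𝒟. -/

import Mathlib

open Complex MeasureTheory Metric Set Filter

noncomputable section

/-- The open unit disc in the complex plane. -/
def unitDisc : Set ℂ := Metric.ball 0 1

/-- The square of the Dirichlet norm:
`‖f‖²_𝒟 = |f(0)|² + ∫_𝔻 |f′(z)|² dA(z)`, with `A` normalized area measure. -/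
def dirNormSq (f : ℂ → ℂ) : ℝ :=
  ‖f 0‖ ^ 2 + (1 / Real.pi) * ∫ z in unitDisc, ‖deriv f z‖ ^ 2

/-- Membership in the Dirichlet space `𝒟`: `f` is holomorphic on `𝔻` and
`|f′|²` is integrable over `𝔻`. -/
def MemDirichlet (f : ℂ → ℂ) : Prop :=
  DifferentiableOn ℂ f unitDisc ∧
    IntegrableOn (fun z : ℂ => ‖deriv f z‖ ^ 2) unitDisc

/-- The weighted composition operator `W_{u,φ} : f ↦ u·(f∘φ)` is bounded
on the Dirichlet space: there is a constant `C` with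
`‖u·(f∘φ)‖²_𝒟 ≤ C ‖f‖²_𝒟` (and `u·(f∘φ) ∈ 𝒟`) for all `f ∈ 𝒟`. -/
def WCOBounded (u φ : ℂ → ℂ) : Prop :=
  ∃ C : ℝ, 0 ≤ C ∧ ∀ f : ℂ → ℂ, MemDirichlet f →
    MemDirichlet (fun z => u z * f (φ z)) ∧
      dirNormSq (fun z => u z * f (φ z)) ≤ C * dirNormSq f


open scoped ENNReal Topology

lemma circ_mean {F : ℂ → ℂ} {z : ℂ} {R r : ℝ} (hF : DifferentiableOn ℂ F (ball z R))
    (hr : 0 < r) (hrR : r < R) :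
    ENNReal.ofReal (2 * Real.pi) * ‖F z‖ₑ ^ 2 ≤
      ∫⁻ θ in Ioo (-Real.pi) Real.pi, ‖F (circleMap z r θ)‖ₑ ^ 2 := by
  have hsub : closedBall z r ⊆ ball z R := closedBall_subset_ball hrR
  have h1 : DiffContOnCl ℂ (fun w => F w ^ 2) (ball z |r|) := by
    rw [abs_of_pos hr]
    apply DifferentiableOn.diffContOnCl
    rw [closure_ball _ hr.ne']
    exact (hF.mono hsub).pow 2
  have h2 := h1.circleAverage
  rw [Real.circleAverage_def] at h2
  have h3 : ∫ θ in (-Real.pi)..Real.pi, F (circleMap z r θ) ^ 2 =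
      ∫ θ in 0..2 * Real.pi, F (circleMap z r θ) ^ 2 := by
    have hp : Function.Periodic (fun θ => F (circleMap z r θ) ^ 2) (2 * Real.pi) := by
      intro θ
      simp [periodic_circleMap z r θ]
    have := hp.intervalIntegral_add_eq (-Real.pi) 0
    rw [zero_add] at this
    rw [← this]
    congr 1
    ring
  rw [← h3, intervalIntegral.integral_of_le (by linarith [Real.pi_pos]),
    integral_Ioc_eq_integral_Ioo] at h2
  have h4 : ∫ θ in Ioo (-Real.pi) Real.pi, F (circleMap z r θ) ^ 2 = (2 * Real.pi : ℝ) • F z ^ 2 := by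
    rw [← h2, smul_smul, mul_inv_cancel₀ (by positivity), one_smul]
  have h5 := enorm_integral_le_lintegral_enorm (μ := volume.restrict (Ioo (-Real.pi) Real.pi))
    (fun θ => F (circleMap z r θ) ^ 2)
  rw [h4, enorm_smul] at h5
  simp only [enorm_pow] at h5
  rwa [Real.enorm_of_nonneg (by positivity)] at h5

lemma area_mean {F : ℂ → ℂ} (hm : Measurable F) {z : ℂ} {R : ℝ} (hR : 0 < R)
    (hF : DifferentiableOn ℂ F (ball z R)) :
    ENNReal.ofReal (R ^ 2) * ‖F z‖ₑ ^ 2 ≤ ∫⁻ w in ball z R, ‖F w‖ₑ ^ 2 := by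
  have e1 : ∫⁻ w in ball z R, ‖F w‖ₑ ^ 2 =
      ∫⁻ w, (ball z R).indicator (fun w => ‖F w‖ₑ ^ 2) (w + z) := by
    rw [lintegral_add_right_eq_self (fun w => (ball z R).indicator (fun w => ‖F w‖ₑ ^ 2) w) z,
      lintegral_indicator measurableSet_ball]
  rw [e1, ← Complex.lintegral_comp_polarCoord_symm]
  have hmeas : Measurable (fun p : ℝ × ℝ => ENNReal.ofReal p.1 •
      (ball z R).indicator (fun w => ‖F w‖ₑ ^ 2) (Complex.polarCoord.symm p + z)) := by
    have a1 : Measurable ((ball z R).indicator (fun w => ‖F w‖ₑ ^ 2)) :=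
      (hm.enorm.pow_const 2).indicator measurableSet_ball
    have a2 : Measurable (fun p : ℝ × ℝ => Complex.polarCoord.symm p + z) := by
      simp only [Complex.polarCoord_symm_apply]
      fun_prop
    exact (by fun_prop : Measurable (fun p : ℝ × ℝ => ENNReal.ofReal p.1)).smul (a1.comp a2)
  rw [show polarCoord.target = Ioi (0:ℝ) ×ˢ Ioo (-Real.pi) Real.pi from rfl, Measure.volume_eq_prod,
    setLIntegral_prod _ hmeas.aemeasurable]
  calc ENNReal.ofReal (R ^ 2) * ‖F z‖ₑ ^ 2
      ≤ ∫⁻ x in Ioo 0 R, ENNReal.ofReal x * (ENNReal.ofReal (2 * Real.pi) * ‖F z‖ₑ ^ 2) := by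
        rw [lintegral_mul_const _ (by fun_prop), ← ofReal_integral_eq_lintegral_ofReal,
          ← integral_Ioc_eq_integral_Ioo, ← intervalIntegral.integral_of_le hR.le, integral_id,
          ← mul_assoc, ← ENNReal.ofReal_mul (by nlinarith)]
        · gcongr
          nlinarith [Real.pi_gt_three, sq_nonneg R]
        · exact (continuous_id.integrableOn_Icc (a := 0) (b := R)).mono_set Ioo_subset_Icc_self
        · filter_upwards [ae_restrict_mem measurableSet_Ioo] with x hx using hx.1.le
    _ ≤ ∫⁻ x in Ioo 0 R, ∫⁻ y in Ioo (-Real.pi) Real.pi, ENNReal.ofReal x •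
          (ball z R).indicator (fun w => ‖F w‖ₑ ^ 2) (Complex.polarCoord.symm (x, y) + z) := by
        apply setLIntegral_mono' measurableSet_Ioo
        intro x hx
        have key : ∀ y : ℝ, (ball z R).indicator (fun w => ‖F w‖ₑ ^ 2)
            (Complex.polarCoord.symm (x, y) + z) = ‖F (circleMap z x y)‖ₑ ^ 2 := by
          intro y
          have : Complex.polarCoord.symm (x, y) + z = circleMap z x y := by
            rw [Complex.polarCoord_symm_apply, circleMap, Complex.exp_mul_I, add_comm]
            simp
          rw [this, indicator_of_mem]
          rw [mem_ball, dist_eq_norm, circleMap_sub_center, norm_circleMap_zero, abs_of_pos hx.1]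
          exact hx.2
        simp only [key, smul_eq_mul]
        rw [lintegral_const_mul _ (by
          have : Measurable (circleMap z x) := (continuous_circleMap z x).measurable
          exact ((hm.comp this).enorm.pow_const 2))]
        gcongr
        exact circ_mean hF hx.1 hx.2
    _ ≤ _ := lintegral_mono_set Ioo_subset_Ioi_self

/-- Area measure on the disc. -/
abbrev discVol : Measure ℂ := volume.restrict unitDisc

/-- An equivalent norm. -/
def PN (f : ℂ → ℂ) : ℝ := ‖f 0‖ + (eLpNorm (deriv f) 2 discVol).toReal

lemma isOpen_unitDisc : IsOpen unitDisc := isOpen_ball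

lemma zero_mem_unitDisc : (0 : ℂ) ∈ unitDisc := by simp [unitDisc]

lemma mem_unitDisc {z : ℂ} : z ∈ unitDisc ↔ ‖z‖ < 1 := by simp [unitDisc]

lemma memDirichlet_iff {f : ℂ → ℂ} :
    MemDirichlet f ↔ DifferentiableOn ℂ f unitDisc ∧ MemLp (deriv f) 2 discVol := by
  unfold MemDirichlet IntegrableOn
  rw [memLp_two_iff_integrable_sq_norm (measurable_deriv f).aestronglyMeasurable]

lemma DifferentiableOn.at_disc {f : ℂ → ℂ} (h : DifferentiableOn ℂ f unitDisc) {z : ℂ}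
    (hz : z ∈ unitDisc) : DifferentiableAt ℂ f z :=
  h.differentiableAt (isOpen_unitDisc.mem_nhds hz)

lemma PN_nonneg (f : ℂ → ℂ) : 0 ≤ PN f := by unfold PN; positivity

lemma lin_comb {f g : ℂ → ℂ} (hf : MemDirichlet f) (hg : MemDirichlet g) (c : ℂ) :
    MemDirichlet (fun z => f z + c * g z) ∧
      PN (fun z => f z + c * g z) ≤ PN f + ‖c‖ * PN g := by
  rw [memDirichlet_iff] at hf hg
  have hae : deriv (fun z => f z + c * g z) =ᵐ[discVol] deriv f + c • deriv g := by
    filter_upwards [ae_restrict_mem isOpen_unitDisc.measurableSet] with z hz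
    have h1 := (hf.1.at_disc hz).hasDerivAt
    have h2 := ((hg.1.at_disc hz).hasDerivAt).const_mul c
    exact (h1.add h2).deriv
  refine ⟨memDirichlet_iff.2 ⟨hf.1.add (hg.1.const_mul c), ?_⟩, ?_⟩
  · rw [memLp_congr_ae hae]
    exact hf.2.add (hg.2.const_smul c)
  · unfold PN
    rw [eLpNorm_congr_ae hae]
    have h1 : eLpNorm (deriv f + c • deriv g) 2 discVol ≤
        eLpNorm (deriv f) 2 discVol + ‖c‖ₑ * eLpNorm (deriv g) 2 discVol := by
      rw [← eLpNorm_const_smul]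
      exact eLpNorm_add_le hf.2.1 (hg.2.const_smul c).1 (by norm_num)
    have h2 := ENNReal.toReal_mono (ENNReal.add_ne_top.2
      ⟨hf.2.2.ne, ENNReal.mul_ne_top enorm_ne_top hg.2.2.ne⟩) h1
    rw [ENNReal.toReal_add hf.2.2.ne (ENNReal.mul_ne_top enorm_ne_top hg.2.2.ne),
      ENNReal.toReal_mul, toReal_enorm] at h2
    have h3 : ‖f 0 + c * g 0‖ ≤ ‖f 0‖ + ‖c‖ * ‖g 0‖ := by
      rw [← norm_mul]; exact norm_add_le _ _
    nlinarith

lemma memDir_const (c : ℂ) : MemDirichlet (fun _ => c) := by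
  refine memDirichlet_iff.2 ⟨by fun_prop, ?_⟩
  have : deriv (fun _ : ℂ => c) = fun _ => 0 := by ext; simp
  rw [this]; exact MemLp.zero'

lemma PN_const (c : ℂ) : PN (fun _ => c) = ‖c‖ := by
  have : deriv (fun _ : ℂ => c) = 0 := by ext; simp
  simp [PN, this]

lemma mul_const_mem {g : ℂ → ℂ} (hg : MemDirichlet g) (c : ℂ) :
    MemDirichlet (fun z => c * g z) ∧ PN (fun z => c * g z) ≤ ‖c‖ * PN g := by
  simpa [PN_const] using lin_comb (memDir_const 0) hg c

lemma lintegral_sq {F : ℂ → ℂ} : ∫⁻ w in unitDisc, ‖F w‖ₑ ^ 2 = eLpNorm F 2 discVol ^ 2 := by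
  have := eLpNorm_nnreal_pow_eq_lintegral (f := F) (μ := discVol) (p := 2) (by norm_num)
  simp only [NNReal.coe_ofNat, ENNReal.coe_ofNat, ENNReal.rpow_ofNat] at this
  exact this.symm

lemma deriv_bound {f : ℂ → ℂ} (hf : MemDirichlet f) {r : ℝ} (hr : r < 1) {z : ℂ} (hz : ‖z‖ ≤ r) :
    ‖deriv f z‖ ≤ (1 - r)⁻¹ * PN f := by
  rw [memDirichlet_iff] at hf
  have hsub : ball z (1 - r) ⊆ unitDisc := by
    intro w hw
    rw [mem_unitDisc]
    rw [mem_ball, dist_eq_norm] at hw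
    have := norm_add_le (w - z) z
    simp at this
    linarith
  have h1 := area_mean (measurable_deriv f) (z := z) (R := 1 - r) (by linarith)
    ((hf.1.deriv isOpen_unitDisc).mono hsub)
  have h2 := h1.trans (lintegral_mono_set hsub)
  rw [lintegral_sq] at h2
  have h3 := ENNReal.toReal_mono (ENNReal.pow_ne_top hf.2.2.ne) h2
  rw [ENNReal.toReal_mul, ENNReal.toReal_pow, ENNReal.toReal_pow, toReal_enorm,
    ENNReal.toReal_ofReal (by positivity), ← mul_pow] at h3
  have h4 := le_of_sq_le_sq h3 (by positivity)
  rw [inv_mul_eq_div, le_div_iff₀ (by linarith), mul_comm]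
  exact h4.trans (by unfold PN; linarith [norm_nonneg (f 0)])

lemma point_bound {f : ℂ → ℂ} (hf : MemDirichlet f) {r : ℝ} (hr : r < 1) {z : ℂ} (hz : ‖z‖ ≤ r) :
    ‖f z‖ ≤ (1 + (1 - r)⁻¹) * PN f := by
  have hr0 : 0 ≤ r := (norm_nonneg z).trans hz
  have h1 := (convex_closedBall (0:ℂ) r).norm_image_sub_le_of_norm_deriv_le (𝕜 := ℂ) (f := f)
    (C := (1 - r)⁻¹ * PN f) (x := 0) (y := z)
    (fun w hw => hf.1.at_disc (by
      rw [mem_unitDisc]; rw [mem_closedBall_zero_iff] at hw; linarith))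
    (fun w hw => deriv_bound hf hr (by simpa using hw)) (by simpa using hr0) (by simpa using hz)
  have h2 : ‖f 0‖ ≤ PN f := by unfold PN; simp
  have h3 : ‖f z‖ ≤ ‖f z - f 0‖ + ‖f 0‖ := by simpa using norm_add_le (f z - f 0) (f 0)
  have h4 : 0 ≤ (1 - r)⁻¹ * PN f := mul_nonneg (by simp; linarith) (PN_nonneg f)
  rw [sub_zero] at h1
  nlinarith

lemma PN_sq_le {f : ℂ → ℂ} (hf : MemDirichlet f) :
    PN f ^ 2 ≤ 2 * (1 + Real.pi) * dirNormSq f := by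
  have h1 : ∫ z in unitDisc, ‖deriv f z‖ ^ 2 = (eLpNorm (deriv f) 2 discVol).toReal ^ 2 := by
    rw [integral_eq_lintegral_of_nonneg_ae (Eventually.of_forall fun _ => by positivity)
      hf.2.aestronglyMeasurable, ← ENNReal.toReal_pow, ← lintegral_sq]
    congr 1
    apply lintegral_congr
    intro z
    rw [ENNReal.ofReal_pow (norm_nonneg _), ofReal_norm]
  unfold PN dirNormSq
  rw [h1]
  set a := ‖f 0‖
  set b := (eLpNorm (deriv f) 2 discVol).toReal
  have hp := Real.pi_pos
  have : 2 * (1 + Real.pi) * (a ^ 2 + 1 / Real.pi * b ^ 2) =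
      2 * a ^ 2 + 2 * b ^ 2 + 2 * Real.pi * a ^ 2 + 2 * (1 / Real.pi) * b ^ 2 := by
    field_simp; ring
  rw [this]
  have : 0 ≤ 2 * Real.pi * a ^ 2 + 2 * (1 / Real.pi) * b ^ 2 := by positivity
  nlinarith [sq_nonneg (a - b)]

lemma backward {φ : ℂ → ℂ} (hd : DifferentiableOn ℂ φ unitDisc) (hm : MapsTo φ unitDisc unitDisc)
    {r : ℝ} (hr : r < 1) (hb : ∀ z ∈ unitDisc, ‖φ z‖ ≤ r) {u : ℂ → ℂ} (hu : MemDirichlet u)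
    (hφu : MemDirichlet fun z => φ z * u z) : WCOBounded u φ := by
  have hr0 : 0 ≤ r := (norm_nonneg _).trans (hb 0 zero_mem_unitDisc)
  set K : ℝ := (1 + (1 - r)⁻¹) ^ 2 * (2 * (1 + Real.pi)) with hK
  have hinv : 0 ≤ (1 - r)⁻¹ := by simp; linarith
  have hK0 : 0 ≤ K := by positivity
  have hs1 : ∀ f, MemDirichlet f → ∀ z ∈ unitDisc, ‖f (φ z)‖ ^ 2 ≤ K * dirNormSq f := by
    intro f hf z hz
    calc ‖f (φ z)‖ ^ 2 ≤ ((1 + (1 - r)⁻¹) * PN f) ^ 2 := by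
          gcongr; exact point_bound hf hr (hb z hz)
      _ = (1 + (1 - r)⁻¹) ^ 2 * PN f ^ 2 := by ring
      _ ≤ (1 + (1 - r)⁻¹) ^ 2 * (2 * (1 + Real.pi) * dirNormSq f) := by
          gcongr; exact PN_sq_le hf
      _ = K * dirNormSq f := by rw [hK]; ring
  have hs2 : ∀ f, MemDirichlet f → ∀ z ∈ unitDisc, ‖deriv f (φ z)‖ ^ 2 ≤ K * dirNormSq f := by
    intro f hf z hz
    calc ‖deriv f (φ z)‖ ^ 2 ≤ ((1 - r)⁻¹ * PN f) ^ 2 := by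
          gcongr; exact deriv_bound hf hr (hb z hz)
      _ ≤ ((1 + (1 - r)⁻¹) * PN f) ^ 2 := by
          have := PN_nonneg f
          gcongr; linarith
      _ = (1 + (1 - r)⁻¹) ^ 2 * PN f ^ 2 := by ring
      _ ≤ (1 + (1 - r)⁻¹) ^ 2 * (2 * (1 + Real.pi) * dirNormSq f) := by
          gcongr; exact PN_sq_le hf
      _ = K * dirNormSq f := by rw [hK]; ring
  set G : ℂ → ℝ := fun z => 6 * ‖deriv u z‖ ^ 2 + 4 * ‖deriv (fun z => φ z * u z) z‖ ^ 2 with hG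
  have hGint : IntegrableOn G unitDisc := (hu.2.const_mul 6).add (hφu.2.const_mul 4)
  have hGi0 : 0 ≤ ∫ z in unitDisc, G z := integral_nonneg fun z => by simp only [hG]; positivity
  have hdom : ∀ f, MemDirichlet f → ∀ z ∈ unitDisc,
      ‖deriv (fun z => u z * f (φ z)) z‖ ^ 2 ≤ K * dirNormSq f * G z := by
    intro f hf z hz
    have dφ := (hd.at_disc hz).hasDerivAt
    have du := (hu.1.at_disc hz).hasDerivAt
    have df := (hf.1.at_disc (hm hz)).hasDerivAt
    have e1 : deriv (fun z => u z * f (φ z)) z =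
        deriv u z * f (φ z) + u z * (deriv f (φ z) * deriv φ z) := (du.mul (df.comp z dφ)).deriv
    have e2 : deriv (fun z => φ z * u z) z = deriv φ z * u z + φ z * deriv u z :=
      (dφ.mul du).deriv
    have b1 := hs1 f hf z hz
    have b2 := hs2 f hf z hz
    have b3 : ‖φ z‖ ≤ 1 := (hb z hz).trans hr.le
    have e3 : u z * deriv φ z = deriv (fun z => φ z * u z) z - φ z * deriv u z := by
      rw [e2]; ring
    have b4 : ‖u z * deriv φ z‖ ≤ ‖deriv (fun z => φ z * u z) z‖ + ‖deriv u z‖ := by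
      rw [e3]
      refine (norm_sub_le _ _).trans ?_
      rw [norm_mul (φ z)]
      nlinarith [norm_nonneg (deriv u z)]
    have b5 : ‖u z * deriv φ z‖ ^ 2 ≤
        2 * ‖deriv (fun z => φ z * u z) z‖ ^ 2 + 2 * ‖deriv u z‖ ^ 2 := by
      nlinarith [norm_nonneg (u z * deriv φ z),
        sq_nonneg (‖deriv (fun z => φ z * u z) z‖ - ‖deriv u z‖)]
    have b6 : ‖deriv (fun z => u z * f (φ z)) z‖ ≤
        ‖deriv u z‖ * ‖f (φ z)‖ + ‖u z * deriv φ z‖ * ‖deriv f (φ z)‖ := by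
      rw [e1, ← norm_mul, ← norm_mul]
      refine (norm_add_le _ _).trans (le_of_eq ?_)
      congr 2
      ring
    have b7 : ‖deriv (fun z => u z * f (φ z)) z‖ ^ 2 ≤
        2 * (‖deriv u z‖ ^ 2 * ‖f (φ z)‖ ^ 2) + 2 * (‖u z * deriv φ z‖ ^ 2 * ‖deriv f (φ z)‖ ^ 2) := by
      refine (pow_le_pow_left₀ (norm_nonneg _) b6 2).trans ?_
      nlinarith [sq_nonneg (‖deriv u z‖ * ‖f (φ z)‖ - ‖u z * deriv φ z‖ * ‖deriv f (φ z)‖)]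
    have hKd : 0 ≤ K * dirNormSq f := (sq_nonneg _).trans b1
    calc _ ≤ _ := b7
      _ ≤ 2 * (‖deriv u z‖ ^ 2 * (K * dirNormSq f)) +
          2 * ((2 * ‖deriv (fun z => φ z * u z) z‖ ^ 2 + 2 * ‖deriv u z‖ ^ 2) *
            (K * dirNormSq f)) := by gcongr
      _ = _ := by simp only [hG]; ring
  refine ⟨‖u 0‖ ^ 2 * K + 1 / Real.pi * (K * ∫ z in unitDisc, G z), by positivity, ?_⟩
  intro f hf
  have hIntg : IntegrableOn (fun z => ‖deriv (fun z => u z * f (φ z)) z‖ ^ 2) unitDisc := by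
    refine Integrable.mono' (hGint.const_mul (K * dirNormSq f)) ?_ ?_
    · exact ((measurable_deriv _).norm.pow_const 2).aestronglyMeasurable
    · filter_upwards [ae_restrict_mem isOpen_unitDisc.measurableSet] with z hz
      rw [Real.norm_of_nonneg (by positivity)]
      exact hdom f hf z hz
  refine ⟨⟨hu.1.mul (hf.1.comp hd hm), hIntg⟩, ?_⟩
  have i1 : ∫ z in unitDisc, ‖deriv (fun z => u z * f (φ z)) z‖ ^ 2 ≤
      K * dirNormSq f * ∫ z in unitDisc, G z := by
    rw [← integral_const_mul]
    exact setIntegral_mono_on hIntg (hGint.const_mul _) isOpen_unitDisc.measurableSet (hdom f hf)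
  have i2 := hs1 f hf 0 zero_mem_unitDisc
  calc dirNormSq (fun z => u z * f (φ z)) = ‖u 0‖ ^ 2 * ‖f (φ 0)‖ ^ 2 +
        (1 / Real.pi) * ∫ z in unitDisc, ‖deriv (fun z => u z * f (φ z)) z‖ ^ 2 := by
        simp only [dirNormSq, norm_mul, mul_pow]
    _ ≤ ‖u 0‖ ^ 2 * (K * dirNormSq f) + (1 / Real.pi) * (K * dirNormSq f * ∫ z in unitDisc, G z) := by
        have := Real.pi_pos
        gcongr
    _ = _ := by ring

lemma complete_seq {x : ℕ → ℂ → ℂ} (hx : ∀ k, MemDirichlet (x k))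
    (hstep : ∀ k, PN (fun z => x (k + 1) z + (-1) * x k z) ≤ (1 / 8 : ℝ) ^ k) :
    ∃ y, MemDirichlet y ∧ ∀ k, PN (fun z => y z + (-1) * x k z) ≤ 3 * (1 / 8 : ℝ) ^ k := by
  have hdiff : ∀ k m, MemDirichlet (fun z => x m z + (-1) * x k z) :=
    fun k m => (lin_comb (hx m) (hx k) (-1)).1
  have hcauchy : ∀ k n, PN (fun z => x (k + n) z + (-1) * x k z) ≤
      8 / 7 * (1 / 8 : ℝ) ^ k - 8 / 7 * (1 / 8 : ℝ) ^ (k + n) := by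
    intro k n
    induction n with
    | zero =>
      have : (fun z => x (k + 0) z + (-1) * x k z) = fun _ => 0 := by ext z; simp
      rw [this, PN_const]; simp
    | succ n ih =>
      have h1 := (lin_comb (hdiff k (k + n)) (hdiff (k + n) (k + n + 1)) 1).2
      have : (fun z => x (k + n) z + (-1) * x k z + 1 * (x (k + n + 1) z + (-1) * x (k + n) z))
        = fun z => x (k + (n + 1)) z + (-1) * x k z := by
        ext z; rw [← add_assoc k n 1]; ring
      rw [this] at h1
      have h2 := hstep (k + n)
      rw [← add_assoc k n 1, pow_succ _ (k + n)] 
      simp only [norm_one, one_mul] at h1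
      rw [← add_assoc k n 1] at h1
      linarith
  have hcauchy' : ∀ k m, k ≤ m → PN (fun z => x m z + (-1) * x k z) ≤ 8 / 7 * (1 / 8 : ℝ) ^ k := by
    intro k m hkm
    obtain ⟨n, rfl⟩ := Nat.exists_eq_add_of_le hkm
    have := hcauchy k n
    have : 0 ≤ 8 / 7 * (1 / 8 : ℝ) ^ (k + n) := by positivity
    linarith
  have hunif : ∀ r < 1, ∀ k m, k ≤ m → ∀ z, ‖z‖ ≤ r →
      dist (x k z) (x m z) ≤ (1 + (1 - r)⁻¹) * (8 / 7) * (1 / 8 : ℝ) ^ k := by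
    intro r hr k m hkm z hz
    have h1 := point_bound (hdiff k m) hr hz
    rw [dist_comm, dist_eq_norm, sub_eq_add_neg, ← neg_one_mul]
    refine h1.trans ?_
    rw [mul_assoc]
    have : 0 ≤ (1 - r)⁻¹ := by simp; linarith
    gcongr
    exact hcauchy' k m hkm
  have hB : ∀ B : ℝ, Tendsto (fun k : ℕ => B * (1 / 8 : ℝ) ^ k) atTop (𝓝 0) := by
    intro B
    simpa using (tendsto_pow_atTop_nhds_zero_of_lt_one (r := (1 / 8 : ℝ)) (by norm_num)
      (by norm_num)).const_mul B
  have hlim : ∀ z, ∃ l, ‖z‖ < 1 → Tendsto (fun m => x m z) atTop (𝓝 l) := by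
    intro z
    by_cases hz : ‖z‖ < 1
    · have : CauchySeq fun m => x m z :=
        cauchySeq_of_le_tendsto_0' _ (fun k m hkm => hunif ‖z‖ hz k m hkm z le_rfl) (hB _)
      obtain ⟨l, hl⟩ := cauchySeq_tendsto_of_complete this
      exact ⟨l, fun _ => hl⟩
    · exact ⟨0, fun h => absurd h hz⟩
  choose y hy using hlim
  have hloc : TendstoLocallyUniformlyOn x y atTop unitDisc := by
    rw [Metric.tendstoLocallyUniformlyOn_iff]
    intro ε hε z hz
    rw [mem_unitDisc] at hz
    obtain ⟨r, hzr, hr⟩ := exists_between hz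
    refine ⟨ball 0 r, mem_nhdsWithin_of_mem_nhds (isOpen_ball.mem_nhds (by simpa using hzr)), ?_⟩
    filter_upwards [(hB ((1 + (1 - r)⁻¹) * (8 / 7))).eventually (gt_mem_nhds hε)] with k hk w hw
    refine lt_of_le_of_lt ?_ hk
    have hw' : ‖w‖ < r := by simpa using hw
    rw [dist_comm]
    refine le_of_tendsto (tendsto_const_nhds.dist (hy w (hw'.trans hr))) ?_
    filter_upwards [eventually_ge_atTop k] with m hm
    exact hunif r hr k m hm w hw'.le
  have hyd : DifferentiableOn ℂ y unitDisc :=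
    hloc.differentiableOn (Eventually.of_forall fun k => (hx k).1) isOpen_unitDisc
  have hder := hloc.deriv (Eventually.of_forall fun k => (hx k).1) isOpen_unitDisc
  have hL : ∀ k, eLpNorm (deriv (fun z => y z + (-1) * x k z)) 2 discVol ≤
      ENNReal.ofReal (8 / 7 * (1 / 8 : ℝ) ^ k) := by
    intro k
    have h1 := Lp.eLpNorm_lim_le_liminf_eLpNorm (μ := discVol) (p := 2)
      (f := fun m => deriv (fun z => x m z + (-1) * x k z))
      (fun m => (measurable_deriv _).aestronglyMeasurable)
      (deriv (fun z => y z + (-1) * x k z)) (by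
        filter_upwards [ae_restrict_mem isOpen_unitDisc.measurableSet] with z hz
        have hk := (((hx k).1.at_disc hz).hasDerivAt).const_mul (-1)
        have e1 : deriv (fun z => y z + (-1) * x k z) z = deriv y z + (-1) * deriv (x k) z :=
          (((hyd.at_disc hz).hasDerivAt).add hk).deriv
        have e2 : ∀ m, deriv (fun z => x m z + (-1) * x k z) z =
            deriv (x m) z + (-1) * deriv (x k) z := fun m =>
          ((((hx m).1.at_disc hz).hasDerivAt).add hk).deriv
        simp only [e1, e2]
        exact (hder.tendsto_at hz).add_const _)
    refine h1.trans ?_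
    refine liminf_le_of_le (by isBoundedDefault) ?_
    intro b hb
    obtain ⟨m, hm, hkm⟩ := (hb.and (eventually_ge_atTop k)).exists
    refine hm.trans ?_
    rw [ENNReal.le_ofReal_iff_toReal_le ((memDirichlet_iff.1 (hdiff k m)).2.2.ne) (by positivity)]
    refine le_trans ?_ (hcauchy' k m hkm)
    unfold PN; simp
  have hyx : ∀ k, MemDirichlet (fun z => y z + (-1) * x k z) := by
    intro k
    refine memDirichlet_iff.2 ⟨hyd.add ((hx k).1.const_mul (-1)),
      (measurable_deriv _).aestronglyMeasurable, ?_⟩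
    exact (hL k).trans_lt ENNReal.ofReal_lt_top
  refine ⟨y, ?_, ?_⟩
  · have := (lin_comb (hyx 0) (hx 0) 1).1
    have e : (fun z => y z + (-1) * x 0 z + 1 * x 0 z) = y := by ext z; ring
    rwa [e] at this
  · intro k
    have h1 : (eLpNorm (deriv (fun z => y z + (-1) * x k z)) 2 discVol).toReal ≤
        8 / 7 * (1 / 8 : ℝ) ^ k := ENNReal.toReal_le_of_le_ofReal (by positivity) (hL k)
    have h2 : ‖y 0 + (-1) * x k 0‖ ≤ 8 / 7 * (1 / 8 : ℝ) ^ k := by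
      refine le_of_tendsto (((hy 0 (by simp)).add_const _).norm) ?_
      filter_upwards [eventually_ge_atTop k] with m hm
      refine le_trans ?_ (hcauchy' k m hm)
      unfold PN; simp
    unfold PN
    have : 0 < (1 / 8 : ℝ) ^ k := by positivity
    linarith

lemma exists_extremal {z : ℂ} (hz : z ∈ unitDisc) :
    ∃ N : ℝ, 1 ≤ N ∧ (∀ h, MemDirichlet h → ‖h z‖ ≤ N * PN h) ∧
      ∃ v, MemDirichlet v ∧ PN v ≤ 1 ∧ 3 / 4 * N ≤ ‖v z‖ := by
  rw [mem_unitDisc] at hz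
  set S : Set ℝ := {t | ∃ h, MemDirichlet h ∧ PN h ≤ 1 ∧ t = ‖h z‖} with hS
  have hC0 : 0 ≤ 1 + (1 - ‖z‖)⁻¹ := by
    have : 0 ≤ (1 - ‖z‖)⁻¹ := by simp; linarith
    linarith
  have hbdd : BddAbove S := by
    refine ⟨1 + (1 - ‖z‖)⁻¹, ?_⟩
    rintro t ⟨h, hh, h1, rfl⟩
    refine (point_bound hh hz le_rfl).trans ?_
    nlinarith
  have h1S : (1 : ℝ) ∈ S := ⟨fun _ => 1, memDir_const 1, by simp [PN_const], by simp⟩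
  have hN1 : 1 ≤ sSup S := le_csSup hbdd h1S
  refine ⟨sSup S, hN1, ?_, ?_⟩
  · intro h hh
    rcases (PN_nonneg h).eq_or_lt with h0 | h0
    · have := point_bound hh hz le_rfl
      rw [← h0] at this ⊢
      simpa using this
    · have hm := mul_const_mem hh ((PN h)⁻¹ : ℝ)
      have hle : ‖(((PN h)⁻¹ : ℝ) : ℂ) * h z‖ ≤ sSup S := by
        refine le_csSup hbdd ⟨_, hm.1, hm.2.trans ?_, rfl⟩
        rw [Complex.norm_real, Real.norm_of_nonneg (by positivity), inv_mul_cancel₀ h0.ne']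
      rw [norm_mul, Complex.norm_real, Real.norm_of_nonneg (by positivity), inv_mul_eq_div,
        div_le_iff₀ h0] at hle
      exact hle
  · obtain ⟨t, ⟨v, hv, hv1, rfl⟩, ht⟩ := exists_lt_of_lt_csSup ⟨1, h1S⟩
      (show 3 / 4 * sSup S < sSup S by linarith)
    exact ⟨v, hv, hv1, ht.le⟩

lemma multiplier_bounded {g : ℂ → ℂ}
    (hg : ∀ u, MemDirichlet u → MemDirichlet (fun z => u z * g z)) :
    ∃ C : ℝ, ∀ z ∈ unitDisc, ‖g z‖ ≤ C := by
  by_contra! hcon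
  choose z hz hgz using fun k : ℕ => hcon ((64 : ℝ) ^ k)
  choose N hN1 hN v hv hv1 hvN using fun k => exists_extremal (hz k)
  have step : ∀ (k : ℕ) (x : {f : ℂ → ℂ // MemDirichlet f}), ∃ y : {f : ℂ → ℂ // MemDirichlet f},
      PN (fun w => y.1 w + (-1) * x.1 w) ≤ (1 / 8 : ℝ) ^ k ∧
      (1 / 8 : ℝ) ^ k * (3 / 4 * N k) ≤ ‖y.1 (z k)‖ := by
    intro k x
    set δ : ℝ := (1 / 8 : ℝ) ^ k with hδ
    have hδ0 : 0 < δ := by positivity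
    have main : ∀ c : ℂ, ‖c‖ = δ → PN (fun w => (x.1 w + c * v k w) + (-1) * x.1 w) ≤ δ := by
      intro c hc
      have e : (fun w => (x.1 w + c * v k w) + (-1) * x.1 w) = fun w => c * v k w := by
        ext w; ring
      rw [e]
      refine (mul_const_mem (hv k) c).2.trans ?_
      rw [hc]
      nlinarith [hv1 k]
    have hnδ : ‖(δ : ℂ)‖ = δ := by rw [Complex.norm_real, Real.norm_of_nonneg hδ0.le]
    have hsum : 2 * (δ * ‖v k (z k)‖) ≤ ‖x.1 (z k) + (δ : ℂ) * v k (z k)‖ +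
        ‖x.1 (z k) + (-(δ : ℂ)) * v k (z k)‖ := by
      have := norm_sub_le (x.1 (z k) + (δ : ℂ) * v k (z k)) (x.1 (z k) + (-(δ : ℂ)) * v k (z k))
      have e : x.1 (z k) + (δ : ℂ) * v k (z k) - (x.1 (z k) + (-(δ : ℂ)) * v k (z k)) =
        2 * ((δ : ℂ) * v k (z k)) := by ring
      rw [e, norm_mul, norm_mul, hnδ] at this
      simpa using this
    have hv' : δ * (3 / 4 * N k) ≤ δ * ‖v k (z k)‖ := by gcongr; exact hvN k
    rcases le_total (δ * ‖v k (z k)‖) ‖x.1 (z k) + (δ : ℂ) * v k (z k)‖ with h | h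
    · exact ⟨⟨_, (lin_comb x.2 (hv k) δ).1⟩, main _ hnδ, hv'.trans h⟩
    · refine ⟨⟨_, (lin_comb x.2 (hv k) (-δ)).1⟩, main _ (by rw [norm_neg, hnδ]), hv'.trans ?_⟩
      show _ ≤ ‖x.1 (z k) + (-(δ : ℂ)) * v k (z k)‖
      linarith
  choose nxt hn1 hn2 using step
  let x : ℕ → {f : ℂ → ℂ // MemDirichlet f} := fun n =>
    Nat.rec ⟨fun _ => 0, memDir_const 0⟩ (fun k y => nxt k y) n
  obtain ⟨y, hy, hyx⟩ := complete_seq (x := fun k => (x k).1) (fun k => (x k).2)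
    (fun k => hn1 k (x k))
  have hlow : ∀ k, (1 / 8 : ℝ) ^ k * (3 / 8 * N k) ≤ ‖y (z k)‖ := by
    intro k
    have h1 : (1 / 8 : ℝ) ^ k * (3 / 4 * N k) ≤ ‖(x (k + 1)).1 (z k)‖ := hn2 k (x k)
    have h2 := hN k _ (lin_comb hy (x (k + 1)).2 (-1)).1
    have h3 : N k * PN (fun w => y w + (-1) * (x (k + 1)).1 w) ≤
        N k * (3 * (1 / 8 : ℝ) ^ (k + 1)) := by
      have := hN1 k
      gcongr
      exact hyx (k + 1)
    have h4 : ‖(x (k + 1)).1 (z k)‖ ≤ ‖y (z k)‖ + ‖y (z k) + (-1) * (x (k + 1)).1 (z k)‖ := by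
      have := norm_sub_le (y (z k)) (y (z k) + (-1) * (x (k + 1)).1 (z k))
      simpa using this
    rw [pow_succ] at h3
    nlinarith
  have hfin : ∀ k : ℕ, (8 : ℝ) ^ k ≤ 8 / 3 * PN (fun w => y w * g w) := by
    intro k
    have h1 := hN k _ (hg y hy)
    rw [norm_mul] at h1
    have h2 : (1 / 8 : ℝ) ^ k * (3 / 8 * N k) * 64 ^ k ≤ ‖y (z k)‖ * ‖g (z k)‖ := by
      gcongr
      · exact hlow k
      · exact (hgz k).le
    have h3 : (1 / 8 : ℝ) ^ k * 64 ^ k = 8 ^ k := by rw [← mul_pow]; norm_num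
    have h4 : N k * (3 / 8 * 8 ^ k) ≤ N k * PN (fun w => y w * g w) := by
      rw [← h3]; linarith
    have := le_of_mul_le_mul_left h4 (by linarith [hN1 k])
    linarith
  obtain ⟨k, hk⟩ := pow_unbounded_of_one_lt (8 / 3 * PN (fun w => y w * g w))
    (by norm_num : (1 : ℝ) < 8)
  linarith [hfin k]

lemma det_mul_complex (a : ℂ) :
    ((ContinuousLinearMap.toSpanSingleton ℂ a).restrictScalars ℝ).det = ‖a‖ ^ 2 := by
  rw [ContinuousLinearMap.det, ← LinearMap.det_toMatrix Complex.basisOneI, Matrix.det_fin_two]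
  simp [LinearMap.toMatrix_apply, ← Complex.normSq_eq_norm_sq, Complex.normSq_apply]

lemma strip_integrable :
    IntegrableOn (fun w : ℂ => 1 / (2 + w.re) ^ 2) {w : ℂ | -1 < w.re ∧ |w.im| < 2} := by
  have h1 : IntegrableOn (fun x : ℝ => 1 / (2 + x) ^ 2) (Ioi (-1)) := by
    refine (integrableOn_add_rpow_Ioi_of_lt (a := -2) (c := -1) (m := 2) (by norm_num)
      (by norm_num)).congr_fun ?_ measurableSet_Ioi
    intro x hx
    have : -1 < x := hx
    show (x + 2) ^ (-2 : ℝ) = _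
    rw [Real.rpow_neg (by linarith), add_comm]
    simp
  have h2 : IntegrableOn (fun _ : ℝ => (1 : ℝ)) (Ioo (-2 : ℝ) 2) := by simp
  have h3 : Integrable (fun p : ℝ × ℝ => 1 / (2 + p.1) ^ 2 * 1)
      ((volume.restrict (Ioi (-1))).prod (volume.restrict (Ioo (-2 : ℝ) 2))) := h1.mul_prod h2
  rw [Measure.prod_restrict, ← Measure.volume_eq_prod] at h3
  have h4 := (Complex.volume_preserving_equiv_real_prod.integrableOn_comp_preimage
    Complex.measurableEquivRealProd.measurableEmbedding).2 h3
  have e : {w : ℂ | -1 < w.re ∧ |w.im| < 2} =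
      Complex.measurableEquivRealProd ⁻¹' Ioi (-1) ×ˢ Ioo (-2) 2 := by
    ext w; simp [abs_lt]
  rw [e]
  refine h4.congr (Eventually.of_forall fun w => ?_)
  simp

lemma memDir_loglog {ζ : ℂ} (hζ : ‖ζ‖ = 1) :
    MemDirichlet (fun w => Complex.log (2 - Complex.log (1 - ζ * w))) := by
  have hslit : ∀ w ∈ unitDisc, 0 < (1 - ζ * w).re := by
    intro w hw
    rw [mem_unitDisc] at hw
    have := Complex.re_le_norm (ζ * w)
    rw [norm_mul, hζ, one_mul] at this
    simp only [Complex.sub_re, Complex.one_re]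
    linarith
  have hnorm : ∀ w ∈ unitDisc, ‖1 - ζ * w‖ < 2 := by
    intro w hw
    rw [mem_unitDisc] at hw
    have := norm_sub_le 1 (ζ * w)
    rw [norm_mul, hζ, one_mul, norm_one] at this
    linarith
  set L : ℂ → ℂ := fun w => -Complex.log (1 - ζ * w) with hL
  have hLd : ∀ w ∈ unitDisc, HasDerivAt L (ζ / (1 - ζ * w)) w := by
    intro w hw
    have h1 : HasDerivAt (fun w => 1 - ζ * w) (-ζ) w := by
      simpa using ((hasDerivAt_id w).const_mul ζ).const_sub 1
    have := (h1.clog (Or.inl (hslit w hw))).neg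
    have e : ζ / (1 - ζ * w) = -(-ζ / (1 - ζ * w)) := by ring
    rw [e]
    exact this
  have hLre : ∀ w ∈ unitDisc, -1 < (L w).re := by
    intro w hw
    simp only [hL, Complex.neg_re, Complex.log_re]
    have h0 : 0 < ‖1 - ζ * w‖ := by
      rw [norm_pos_iff]; intro h; have := hslit w hw; rw [h] at this; simp at this
    have := Real.log_lt_log h0 (hnorm w hw)
    have := Real.log_two_lt_d9
    linarith
  have hLim : ∀ w ∈ unitDisc, |(L w).im| < 2 := by
    intro w hw
    simp only [hL, Complex.neg_im, Complex.log_im, abs_neg]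
    have := Complex.abs_arg_lt_pi_div_two_iff.2 (Or.inl (hslit w hw))
    have := Real.pi_lt_d2
    linarith
  have hLinj : InjOn L unitDisc := by
    intro a ha b hb hab
    have h1 : Complex.log (1 - ζ * a) = Complex.log (1 - ζ * b) := neg_injective hab
    have ne : ∀ w ∈ unitDisc, 1 - ζ * w ≠ 0 := by
      intro w hw h; have := hslit w hw; rw [h] at this; simp at this
    have h2 : 1 - ζ * a = 1 - ζ * b := by
      rw [← Complex.exp_log (ne a ha), ← Complex.exp_log (ne b hb), h1]
    have hζ0 : ζ ≠ 0 := by rw [← norm_pos_iff, hζ]; norm_num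
    exact mul_left_cancel₀ hζ0 (sub_right_injective h2)
  have hre : ∀ w ∈ unitDisc, 0 < (2 + L w).re := by
    intro w hw
    have := hLre w hw
    simp only [Complex.add_re, Complex.re_ofNat]
    linarith
  have hfd : ∀ w ∈ unitDisc, HasDerivAt (fun w => Complex.log (2 - Complex.log (1 - ζ * w)))
      ((ζ / (1 - ζ * w)) / (2 + L w)) w := by
    intro w hw
    exact ((hLd w hw).const_add 2).clog (Or.inl (hre w hw))
  refine ⟨fun w hw => (hfd w hw).differentiableAt.differentiableWithinAt, ?_⟩
  have hsub : L '' unitDisc ⊆ {w : ℂ | -1 < w.re ∧ |w.im| < 2} := by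
    rintro _ ⟨w, hw, rfl⟩
    exact ⟨hLre w hw, hLim w hw⟩
  have h1 := strip_integrable.mono_set hsub
  rw [integrableOn_image_iff_integrableOn_abs_det_fderiv_smul volume isOpen_unitDisc.measurableSet
    (f' := fun w => (ContinuousLinearMap.toSpanSingleton ℂ (ζ / (1 - ζ * w))).restrictScalars ℝ)
    (fun w hw => ((hLd w hw).hasFDerivAt.restrictScalars ℝ).hasFDerivWithinAt) hLinj] at h1
  refine Integrable.mono' h1 ((measurable_deriv _).norm.pow_const 2).aestronglyMeasurable ?_
  filter_upwards [ae_restrict_mem isOpen_unitDisc.measurableSet] with w hw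
  rw [(hfd w hw).deriv, Real.norm_of_nonneg (by positivity), det_mul_complex,
    abs_of_nonneg (by positivity), norm_div, div_pow, smul_eq_mul, mul_one_div]
  have h2 := hre w hw
  have h3 := Complex.re_le_norm (2 + L w)
  have h4 : (2 + L w).re = 2 + (L w).re := by simp
  rw [← h4]
  gcongr

lemma loglog_large {ζ : ℂ} {a : ℕ → ℂ} (ha : ∀ n, a n ∈ unitDisc) (hζ : ‖ζ‖ = 1)
    (h : Tendsto (fun n => ζ * a n) atTop (𝓝 1)) (C : ℝ) :
    ∃ n, C < ‖Complex.log (2 - Complex.log (1 - ζ * a n))‖ := by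
  have hne : ∀ n, 1 - ζ * a n ≠ 0 := by
    intro n h0
    have := mem_unitDisc.1 (ha n)
    have h1 : ‖ζ * a n‖ = 1 := by rw [← sub_eq_zero.1 h0]; simp
    rw [norm_mul, hζ, one_mul] at h1
    linarith
  have h1 : Tendsto (fun n => ‖1 - ζ * a n‖) atTop (𝓝[>] 0) := by
    refine tendsto_nhdsWithin_iff.2 ⟨?_, Eventually.of_forall fun n => norm_pos_iff.2 (hne n)⟩
    simpa using (h.const_sub 1).norm
  have h2 := (Real.tendsto_log_nhdsGT_zero.comp h1).eventually (eventually_lt_atBot (-Real.exp (C)))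
  obtain ⟨n, hn⟩ := h2.exists
  refine ⟨n, ?_⟩
  have h3 : Real.exp C < ‖2 - Complex.log (1 - ζ * a n)‖ := by
    refine lt_of_lt_of_le ?_ (Complex.re_le_norm _)
    simp only [Complex.sub_re, Complex.log_re, Complex.re_ofNat]
    simp only [Function.comp] at hn
    linarith
  refine lt_of_lt_of_le ?_ (Complex.re_le_norm _)
  rw [Complex.log_re]
  exact (Real.lt_log_iff_exp_lt ((Real.exp_pos _).trans h3)).2 h3

/-- For a holomorphic self-map `φ` of `𝔻`, one has `ℳ(φ) = 𝒟`, i.e. `W_{u,φ}`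
is bounded on `𝒟` for every `u ∈ 𝒟`, if and only if `sup_{z∈𝔻}|φ(z)| < 1`
and `φ` is a multiplier of `𝒟`. -/
theorem multSpace_eq_dirichlet_iff (φ : ℂ → ℂ)
    (hd : DifferentiableOn ℂ φ unitDisc)
    (hm : Set.MapsTo φ unitDisc unitDisc) :
    (∀ u : ℂ → ℂ, MemDirichlet u → WCOBounded u φ) ↔
      ((∃ r : ℝ, r < 1 ∧ ∀ z ∈ unitDisc, ‖φ z‖ ≤ r) ∧
        ∀ f : ℂ → ℂ, MemDirichlet f → MemDirichlet fun z => φ z * f z) := by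
  constructor
  · intro H
    have hmul : ∀ f, MemDirichlet f → MemDirichlet (fun w => w) →
        MemDirichlet fun z => φ z * f z := by
      intro f hf hid
      obtain ⟨C, _, hC⟩ := H f hf
      have := (hC _ hid).1
      simpa only [mul_comm] using this
    have hid : MemDirichlet (fun w => w) := by
      refine ⟨by fun_prop, ?_⟩
      simp [unitDisc, IntegrableOn, isFiniteMeasure_restrict,
        measure_ball_lt_top.ne]
    refine ⟨?_, fun f hf => hmul f hf hid⟩
    by_contra! hcon
    choose z hz hφz using fun n : ℕ => hcon (1 - 1 / ((n : ℝ) + 1)) (by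
      have : 0 < 1 / ((n : ℝ) + 1) := by positivity
      linarith)
    have hin : ∀ n, φ (z n) ∈ closedBall (0 : ℂ) 1 := fun n =>
      ball_subset_closedBall (hm (hz n))
    obtain ⟨b, -, s, hs, hb⟩ := (isCompact_closedBall (0 : ℂ) 1).tendsto_subseq hin
    have hnb : ‖b‖ = 1 := by
      have h1 : Tendsto (fun n => ‖φ (z n)‖) atTop (𝓝 1) := by
        refine tendsto_of_tendsto_of_tendsto_of_le_of_le (g := fun n : ℕ => 1 - 1 / ((n : ℝ) + 1))
          (h := fun _ => 1) ?_ tendsto_const_nhds (fun n => (hφz n).le)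
          (fun n => (mem_unitDisc.1 (hm (hz n))).le)
        simpa using (tendsto_one_div_add_atTop_nhds_zero_nat (𝕜 := ℝ)).const_sub 1
      exact tendsto_nhds_unique hb.norm (h1.comp hs.tendsto_atTop)
    set ζ : ℂ := (starRingEnd ℂ) b with hζ
    have hζ1 : ‖ζ‖ = 1 := by rw [hζ, RCLike.norm_conj, hnb]
    have hζb : Tendsto (fun n => ζ * φ (z (s n))) atTop (𝓝 1) := by
      have := hb.const_mul ζ
      rw [hζ, Complex.conj_mul', hnb] at this
      simpa using this
    obtain ⟨C, hC⟩ := multiplier_bounded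
      (g := fun w => Complex.log (2 - Complex.log (1 - ζ * φ w))) (fun u hu => by
        obtain ⟨C, _, hC⟩ := H u hu
        exact (hC _ (memDir_loglog hζ1)).1)
    obtain ⟨n, hn⟩ := loglog_large (fun n => hm (hz (s n))) hζ1 hζb C
    exact absurd (hC _ (hz (s n))) (not_le.2 hn)
  · rintro ⟨⟨r, hr, hb⟩, hmul⟩ u hu
    exact backward hd hm hr hb hu (hmul u hu)
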